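/- Let Φ₁ and Φ₂ be two Hawkes kernel matrices, each satisfying hypothesis (H), let Σ be a diagonal D×D matrix with strictly positive diagonal entries, and let g₁ and g₂ be the conditional-expectation matrices associated with (Φ₁, Σ) and (Φ₂, Σ) respectively. If g₁(t) = g₂(t) for almost every t ∈ ℝ, then Φ₁(t) = Φ₂(t) for almost every t ∈ ℝ. That is, the kernel matrix of a stationary Hawkes process is uniquely determined by its second-order statistics (its conditional-expectation matrix) together with its mean intensity matrix Σ. -/

import Mathlib

open MeasureTheory Matrix Filter Set

/-- Entrywise matrix convolution:
`(A ⋆ B)^{ij}(t) = ∑_{k} ∫ A^{ik}(s) B^{kj}(t - s) ds`. -/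
noncomputable def mconv (D : ℕ) (A B : ℝ → Matrix (Fin D) (Fin D) ℝ) :
    ℝ → Matrix (Fin D) (Fin D) ℝ :=
  fun t => Matrix.of fun i j => ∑ k : Fin D, ∫ s : ℝ, A s i k * B (t - s) k j

/-- `mconvIter D Φ k` is the `(k+1)`-fold matrix convolution `Φ^{⋆(k+1)}`. -/
noncomputable def mconvIter (D : ℕ) (Φ : ℝ → Matrix (Fin D) (Fin D) ℝ) :
    ℕ → ℝ → Matrix (Fin D) (Fin D) ℝ
  | 0 => Φ
  | (k + 1) => mconv D Φ (mconvIter D Φ k)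

/-- `Ψ = ∑_{k=1}^∞ Φ^{⋆k}`, defined entrywise as a pointwise sum. -/
noncomputable def hawkesPsi (D : ℕ) (Φ : ℝ → Matrix (Fin D) (Fin D) ℝ) :
    ℝ → Matrix (Fin D) (Fin D) ℝ :=
  fun t => Matrix.of fun i j => ∑' k : ℕ, mconvIter D Φ k t i j

/-- The matrix `‖Φ‖` of `L¹` norms: `‖Φ‖^{ij} = ∫ φ^{ij}(t) dt` (entries nonnegative). -/
noncomputable def kernelNorm (D : ℕ) (Φ : ℝ → Matrix (Fin D) (Fin D) ℝ) :
    Matrix (Fin D) (Fin D) ℝ :=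
  Matrix.of fun i j => ∫ t : ℝ, Φ t i j

/-- A Hawkes kernel matrix: measurable, nonnegative, integrable and causal entries. -/
def IsHawkesKernel (D : ℕ) (Φ : ℝ → Matrix (Fin D) (Fin D) ℝ) : Prop :=
  (∀ i j, Measurable fun t => Φ t i j) ∧
  (∀ t, ∀ i j, 0 ≤ Φ t i j) ∧
  (∀ i j, Integrable fun t => Φ t i j) ∧
  (∀ t < (0 : ℝ), Φ t = 0)

/-- Hypothesis (H): the spectral radius of `‖Φ‖` is strictly smaller than 1. -/
def HypothesisH (D : ℕ) (Φ : ℝ → Matrix (Fin D) (Fin D) ℝ) : Prop :=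
  spectralRadius ℂ ((kernelNorm D Φ).map Complex.ofReal) < 1

/-- `q(t) = Σ Ψ(-t)ᵀ Σ⁻¹`. -/
noncomputable def hawkesQ (D : ℕ) (Φ : ℝ → Matrix (Fin D) (Fin D) ℝ)
    (S : Matrix (Fin D) (Fin D) ℝ) : ℝ → Matrix (Fin D) (Fin D) ℝ :=
  fun t => S * (hawkesPsi D Φ (-t))ᵀ * S⁻¹

/-- The conditional-expectation matrix
`g(t) = Ψ(t) + Σ Ψ(-t)ᵀ Σ⁻¹ + (Ψ ⋆ q)(t)`. -/
noncomputable def hawkesG (D : ℕ) (Φ : ℝ → Matrix (Fin D) (Fin D) ℝ)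
    (S : Matrix (Fin D) (Fin D) ℝ) : ℝ → Matrix (Fin D) (Fin D) ℝ :=
  fun t => hawkesPsi D Φ t + hawkesQ D Φ S t +
    mconv D (hawkesPsi D Φ) (hawkesQ D Φ S) t

/-- Entrywise Laplace transform `F̂(z) = ∫ F(t) e^{zt} dt`. -/
noncomputable def mlaplace (D : ℕ) (F : ℝ → Matrix (Fin D) (Fin D) ℝ) (z : ℂ) :
    Matrix (Fin D) (Fin D) ℂ :=
  Matrix.of fun i j => ∫ t : ℝ, (F t i j : ℂ) * Complex.exp (z * t)

/-!
Wiener–Hopf factorization. Writing `Â` for the Fourier transform of a matrix kernel, the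
definition of `g` reads `1 + ĝ = (1 + Ψ̂)(1 + q̂)`, where `1 + Ψ̂ = (1 - Φ̂)⁻¹` is
invertible among the symbols of causal kernels, and `1 + q̂`, a conjugated reflection of
`1 + Ψ̂`, is invertible among the symbols of anticausal ones. If two kernels have the
same `g`, then `(1 - Φ̂₂)(1 + Ψ̂₁) = (1 + q̂₂)(1 + q̂₁)⁻¹` is at once causal and
anticausal. By injectivity of the Fourier transform on `L¹` its kernel vanishes almost
everywhere, since it is supported in `{0}`. Hence `1 - Φ̂₂ = (1 + Ψ̂₁)⁻¹ = 1 - Φ̂₁`.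
-/

section Fourier

open FourierTransform
open scoped ContDiff

variable {V E : Type*} [NormedAddCommGroup V] [InnerProductSpace ℝ V] [MeasurableSpace V]
  [BorelSpace V] [FiniteDimensional ℝ V] [NormedAddCommGroup E] [NormedSpace ℂ E]

theorem fourier_add_of_integrable {f g : V → E} (hf : Integrable f) (hg : Integrable g) (w : V) :
    𝓕 (fun v => f v + g v) w = 𝓕 f w + 𝓕 g w := by
  simp only [Real.fourier_eq, smul_add]
  exact integral_add ((Real.fourierIntegral_convergent_iff w).2 hf)
    ((Real.fourierIntegral_convergent_iff w).2 hg)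

theorem fourier_const_smul (c : ℂ) (f : V → E) (w : V) :
    𝓕 (fun v => c • f v) w = c • 𝓕 f w := by
  simp only [Real.fourier_eq, smul_comm _ c, integral_smul]

theorem fourier_comp_neg (f : V → E) (w : V) : 𝓕 (fun v => f (-v)) w = 𝓕 f (-w) := by
  rw [← Real.fourierInv_eq_fourier_comp_neg, Real.fourierInv_eq_fourier_neg]

theorem fourier_finsetSum {ι : Type*} (s : Finset ι) {f : ι → V → E}
    (hf : ∀ i ∈ s, Integrable (f i)) (w : V) :
    𝓕 (fun v => ∑ i ∈ s, f i v) w = ∑ i ∈ s, 𝓕 (f i) w := by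
  simp only [Real.fourier_eq, Finset.smul_sum]
  exact integral_finsetSum s fun i hi => (Real.fourierIntegral_convergent_iff w).2 (hf i hi)

theorem hasSum_fourier_of_summable_integral_norm {ι : Type*} [Countable ι] {f : ι → V → E}
    (hf : ∀ i, Integrable (f i)) (hsum : Summable fun i => ∫ v, ‖f i v‖) (w : V) :
    HasSum (fun i => 𝓕 (f i) w) (𝓕 (fun v => ∑' i, f i v) w) := by
  simp only [Real.fourier_eq, Circle.smul_def, ← tsum_const_smul'']
  refine hasSum_integral_of_summable_integral_norm
    (fun i => (Real.fourierIntegral_convergent_iff w).2 (hf i)) ?_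
  simpa only [norm_smul, Circle.norm_coe, one_mul] using hsum

theorem integral_fourier_smul_eq [CompleteSpace E] {f : V → ℂ} {g : V → E} (hf : Integrable f)
    (hg : Integrable g) : ∫ v, 𝓕 f v • g v = ∫ v, f v • 𝓕 g v := by
  simpa only [flip_innerₗ] using! VectorFourier.integral_fourierIntegral_smul_eq_flip
    (L := innerₗ V) Real.continuous_fourierChar continuous_inner hf hg

theorem ae_eq_of_fourier_eq [CompleteSpace E] {f g : V → E} (hf : Integrable f)
    (hg : Integrable g) (h : 𝓕 f = 𝓕 g) : f =ᵐ[volume] g := by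
  refine ae_eq_of_integral_contDiff_smul_eq hf.locallyIntegrable hg.locallyIntegrable
    fun φ hφ hφ_supp => ?_
  have hφ_supp' : HasCompactSupport (Complex.ofRealCLM ∘ φ) := hφ_supp.comp_left rfl
  have hφ' : ContDiff ℝ ∞ (Complex.ofRealCLM ∘ φ) := Complex.ofRealCLM.contDiff.comp hφ
  let χ : SchwartzMap V ℂ := 𝓕⁻ (hφ_supp'.toSchwartzMap hφ')
  have hχ (v : V) : 𝓕 (χ : V → ℂ) v = φ v := by
    rw [← SchwartzMap.fourier_coe, fourier_fourierInv_eq]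
    rfl
  have hpair (u : V → E) (hu : Integrable u) : ∫ v, φ v • u v = ∫ v, χ v • 𝓕 u v := by
    simp_rw [← integral_fourier_smul_eq χ.integrable hu, hχ, Complex.coe_smul]
  rw [hpair f hf, hpair g hg, h]

theorem integrable_integral_mul_sub {f g : V → ℝ} (hf : Integrable f) (hg : Integrable g) :
    Integrable fun t => ∫ s, f s * g (t - s) :=
  hf.integrable_convolution (ContinuousLinearMap.mul ℝ ℝ) hg

theorem fourier_integral_mul_sub {f g : V → ℝ} (hf : Integrable f) (hg : Integrable g) (w : V) :
    𝓕 (fun t => ((∫ s, f s * g (t - s) : ℝ) : ℂ)) w =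
      𝓕 (fun t => (f t : ℂ)) w * 𝓕 (fun t => (g t : ℂ)) w := by
  have hf' : Integrable fun t => (f t : ℂ) := hf.ofReal
  have hg' : Integrable fun t => (g t : ℂ) := hg.ofReal
  rw [← Real.fourier_mul_convolution_eq hf' hg']
  simp only [← integral_complex_ofReal, Complex.ofReal_mul]
  rfl

end Fourier

section Series

variable {α E ι : Type*} [MeasurableSpace α] {μ : Measure α} [NormedAddCommGroup E]
  [CompleteSpace E] [Countable ι]

theorem integrable_tsum_of_summable_integral_norm {f : ι → α → E}
    (hf : ∀ i, Integrable (f i) μ) (hsum : Summable fun i => ∫ a, ‖f i a‖ ∂μ) :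
    Integrable (fun a => ∑' i, f i a) μ := by
  have hL1 : ∑' i, ‖(hf i).toL1 (f i)‖ₑ ≠ ⊤ := by
    rw [tsum_enorm_ne_top_iff_summable_norm]
    simpa only [L1.norm_of_fun_eq_integral_norm] using hsum
  refine (L1.integrable_coeFn (∑' i, (hf i).toL1 (f i))).congr ?_
  filter_upwards [Lp.coeFn_tsum hL1, ae_all_iff.2 fun i => (hf i).coeFn_toL1] with a htsum hcoe
  rw [htsum]
  exact tsum_congr hcoe

end Series

section SpectralRadius

theorem summable_pow_of_spectralRadius_lt_one {A : Type*} [NormedRing A] [NormedAlgebra ℂ A]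
    [CompleteSpace A] {a : A} (ha : spectralRadius ℂ a < 1) : Summable fun k : ℕ => a ^ k := by
  obtain ⟨r, har, hr⟩ := ENNReal.lt_iff_exists_nnreal_btwn.1 ha
  have hr1 : (r : ℝ) < 1 := by exact_mod_cast hr
  have hroot : ∀ᶠ n : ℕ in atTop, (‖a ^ n‖₊ : ENNReal) ^ (1 / n : ℝ) < r :=
    (spectrum.pow_nnnorm_pow_one_div_tendsto_nhds_spectralRadius a).eventually_lt_const har
  refine Summable.of_norm_bounded_eventually_nat (summable_geometric_of_lt_one r.2 hr1) ?_
  filter_upwards [hroot, eventually_gt_atTop 0] with n hn hn0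
  have hle := ENNReal.pow_le_pow_left (n := n) hn.le
  rw [one_div, ENNReal.rpow_inv_natCast_pow hn0.ne'] at hle
  exact_mod_cast hle

theorem summable_matrix_pow_of_spectralRadius_lt_one {n : Type*} [Fintype n] [DecidableEq n]
    {a : Matrix n n ℂ} (ha : spectralRadius ℂ a < 1) : Summable fun k : ℕ => a ^ k :=
  letI := Matrix.linftyOpNormedRing (n := n) (α := ℂ)
  letI := Matrix.linftyOpNormedAlgebra (n := n) (R := ℂ) (α := ℂ)
  haveI : CompleteSpace (Matrix n n ℂ) := FiniteDimensional.complete ℂ _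
  summable_pow_of_spectralRadius_lt_one ha

end SpectralRadius

section MatrixFourier

open FourierTransform

variable {l m n : Type*}

/-- Entrywise integrability of a matrix-valued function. -/
def EntryIntegrable (A : ℝ → Matrix m n ℝ) : Prop :=
  ∀ i j, Integrable fun t => A t i j

/-- The entrywise Fourier transform of a real matrix-valued function, in Mathlib's normalisation
`Â(w) = ∫ A(t) exp(-2πi t w) dt`. -/
noncomputable def matrixFourier (A : ℝ → Matrix m n ℝ) : ℝ → Matrix m n ℂ :=
  fun w => Matrix.of fun i j => 𝓕 (fun t => (A t i j : ℂ)) w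

theorem EntryIntegrable.add {A B : ℝ → Matrix m n ℝ} (hA : EntryIntegrable A)
    (hB : EntryIntegrable B) : EntryIntegrable fun t => A t + B t :=
  fun i j => (hA i j).add (hB i j)

theorem EntryIntegrable.neg {A : ℝ → Matrix m n ℝ} (hA : EntryIntegrable A) :
    EntryIntegrable fun t => -A t :=
  fun i j => (hA i j).neg

theorem EntryIntegrable.const_mul [Fintype m] {A : ℝ → Matrix m n ℝ} (hA : EntryIntegrable A)
    (C : Matrix l m ℝ) : EntryIntegrable fun t => C * A t := fun i j => by
  simp only [Matrix.mul_apply]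
  exact integrable_finsetSum _ fun k _ => (hA k j).const_mul (C i k)

theorem EntryIntegrable.mul_const [Fintype n] {A : ℝ → Matrix m n ℝ} (hA : EntryIntegrable A)
    (C : Matrix n l ℝ) : EntryIntegrable fun t => A t * C := fun i j => by
  simp only [Matrix.mul_apply]
  exact integrable_finsetSum _ fun k _ => (hA i k).mul_const (C k j)

theorem EntryIntegrable.transpose_comp_neg {A : ℝ → Matrix m n ℝ} (hA : EntryIntegrable A) :
    EntryIntegrable fun t => (A (-t))ᵀ :=
  fun i j => (hA j i).comp_neg

theorem matrixFourier_add {A B : ℝ → Matrix m n ℝ} (hA : EntryIntegrable A)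
    (hB : EntryIntegrable B) :
    matrixFourier (fun t => A t + B t) = matrixFourier A + matrixFourier B := by
  ext w i j
  simp only [matrixFourier, Matrix.of_apply, Matrix.add_apply, Pi.add_apply, Complex.ofReal_add]
  exact fourier_add_of_integrable (hA i j).ofReal (hB i j).ofReal w

theorem matrixFourier_neg (A : ℝ → Matrix m n ℝ) :
    matrixFourier (fun t => -A t) = -matrixFourier A := by
  ext w i j
  simpa [matrixFourier] using fourier_const_smul (-1) (fun t => (A t i j : ℂ)) w

theorem matrixFourier_const_mul [Fintype m] (C : Matrix l m ℝ) {A : ℝ → Matrix m n ℝ}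
    (hA : EntryIntegrable A) (w : ℝ) :
    matrixFourier (fun t => C * A t) w = C.map Complex.ofRealHom * matrixFourier A w := by
  ext i j
  simp only [matrixFourier, Matrix.of_apply, Matrix.mul_apply, Matrix.map_apply,
    Complex.ofReal_sum, Complex.ofReal_mul, Complex.ofRealHom_eq_coe]
  rw [fourier_finsetSum _ fun k _ => (hA k j).ofReal.const_mul _]
  exact Finset.sum_congr rfl fun k _ => fourier_const_smul _ _ w

theorem matrixFourier_transpose (A : ℝ → Matrix m n ℝ) (w : ℝ) :
    matrixFourier (fun t => (A t)ᵀ) w = (matrixFourier A w)ᵀ :=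
  rfl

theorem matrixFourier_mul_const [Fintype n] (C : Matrix n l ℝ) {A : ℝ → Matrix m n ℝ}
    (hA : EntryIntegrable A) (w : ℝ) :
    matrixFourier (fun t => A t * C) w = matrixFourier A w * C.map Complex.ofRealHom := by
  have hAt : EntryIntegrable fun t => (A t)ᵀ := fun i j => hA j i
  rw [← transpose_inj, transpose_mul, ← transpose_map, ← matrixFourier_transpose,
    ← matrixFourier_transpose, ← matrixFourier_const_mul Cᵀ hAt]
  simp only [transpose_mul]

theorem matrixFourier_comp_neg (A : ℝ → Matrix m n ℝ) (w : ℝ) :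
    matrixFourier (fun t => A (-t)) w = matrixFourier A (-w) := by
  ext i j
  exact fourier_comp_neg (fun t => (A t i j : ℂ)) w

theorem matrixFourier_congr_ae {A B : ℝ → Matrix m n ℝ} (h : ∀ᵐ t, A t = B t) :
    matrixFourier A = matrixFourier B := by
  ext w i j
  exact Real.fourier_congr_ae (h.mono fun t ht => by simp only [ht]) w

theorem ae_eq_of_matrixFourier_eq [Countable m] [Countable n] {A B : ℝ → Matrix m n ℝ}
    (hA : EntryIntegrable A) (hB : EntryIntegrable B) (h : matrixFourier A = matrixFourier B) :
    ∀ᵐ t, A t = B t := by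
  have hentry (i : m) (j : n) : ∀ᵐ t, (A t i j : ℂ) = B t i j :=
    ae_eq_of_fourier_eq (hA i j).ofReal (hB i j).ofReal
      (funext fun w => congrFun₂ (congrFun h w) i j)
  filter_upwards [ae_all_iff.2 fun i => ae_all_iff.2 (hentry i)] with t ht
  ext i j
  exact Complex.ofReal_injective (ht i j)

end MatrixFourier

section Convolution

variable {D : ℕ} {A B : ℝ → Matrix (Fin D) (Fin D) ℝ}

theorem EntryIntegrable.mconv (hA : EntryIntegrable A) (hB : EntryIntegrable B) :
    EntryIntegrable (mconv D A B) := fun i j => by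
  simp only [_root_.mconv, Matrix.of_apply]
  exact integrable_finsetSum _ fun k _ => integrable_integral_mul_sub (hA i k) (hB k j)

theorem matrixFourier_mconv (hA : EntryIntegrable A) (hB : EntryIntegrable B) :
    matrixFourier (mconv D A B) = matrixFourier A * matrixFourier B := by
  ext w i j
  simp only [matrixFourier, mconv, Matrix.of_apply, Pi.mul_apply, Matrix.mul_apply,
    Complex.ofReal_sum]
  rw [fourier_finsetSum _ fun k _ => (integrable_integral_mul_sub (hA i k) (hB k j)).ofReal]
  exact Finset.sum_congr rfl fun k _ => fourier_integral_mul_sub (hA i k) (hB k j) w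

theorem mconv_nonneg (hA : ∀ t i j, 0 ≤ A t i j) (hB : ∀ t i j, 0 ≤ B t i j) (t : ℝ)
    (i j : Fin D) : 0 ≤ mconv D A B t i j := by
  simp only [mconv, Matrix.of_apply]
  exact Finset.sum_nonneg fun k _ => integral_nonneg fun s => mul_nonneg (hA s i k) (hB (t - s) k j)

theorem mconv_eq_zero_of_notMem {s : AddSubmonoid ℝ} (hA : ∀ t ∉ s, A t = 0)
    (hB : ∀ t ∉ s, B t = 0) : ∀ t ∉ s, mconv D A B t = 0 := by
  intro t ht
  have hvanish (u : ℝ) (i j k : Fin D) : A u i k * B (t - u) k j = 0 := by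
    by_cases hu : u ∈ s
    · have htu : t - u ∉ s := fun h => ht (by simpa using s.add_mem hu h)
      simp [hB _ htu]
    · simp [hA u hu]
  ext i j
  simp [mconv, hvanish]

theorem matrixFourier_zero_eq_map_kernelNorm (A : ℝ → Matrix (Fin D) (Fin D) ℝ) :
    matrixFourier A 0 = (kernelNorm D A).map Complex.ofReal := by
  ext i j
  simp only [matrixFourier, kernelNorm, Matrix.of_apply, Matrix.map_apply, Real.fourier_eq,
    inner_zero_right, neg_zero, AddChar.map_zero_eq_one, one_smul]
  exact integral_complex_ofReal

end Convolution

section WienerMonoid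

open scoped Pointwise

variable {D : ℕ} {A B : ℝ → Matrix (Fin D) (Fin D) ℝ} {s s' : AddSubmonoid ℝ}

theorem one_add_matrixFourier_mul_one_add_matrixFourier (hA : EntryIntegrable A)
    (hB : EntryIntegrable B) :
    (1 + matrixFourier A) * (1 + matrixFourier B) =
      1 + matrixFourier fun t => A t + B t + mconv D A B t := by
  rw [matrixFourier_add (hA.add hB) (hA.mconv hB), matrixFourier_add hA hB,
    matrixFourier_mconv hA hB]
  noncomm_ring

/-- The monoid of symbols `1 + Â` of integrable matrix kernels `A` supported in the additive
submonoid `s` of the time axis. For `s = [0, ∞)` and `s = (-∞, 0]` these are the causal and the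
anticausal symbols of Wiener–Hopf theory; the summand `1` stands for a Dirac mass at time `0`. -/
def wienerMonoid (D : ℕ) (s : AddSubmonoid ℝ) :
    Submonoid (ℝ → Matrix (Fin D) (Fin D) ℂ) where
  carrier := {X | ∃ A : ℝ → Matrix (Fin D) (Fin D) ℝ,
    EntryIntegrable A ∧ (∀ t ∉ s, A t = 0) ∧ X = 1 + matrixFourier A}
  one_mem' := ⟨0, fun _ _ => integrable_zero _ _ _, fun _ _ => rfl, by
    ext w i j
    simp [matrixFourier, Real.fourier_eq]⟩
  mul_mem' := by
    rintro _ _ ⟨A, hA, hAs, rfl⟩ ⟨B, hB, hBs, rfl⟩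
    exact ⟨_, (hA.add hB).add (hA.mconv hB),
      fun t ht => by simp [hAs t ht, hBs t ht, mconv_eq_zero_of_notMem hAs hBs t ht],
      one_add_matrixFourier_mul_one_add_matrixFourier hA hB⟩

theorem one_add_matrixFourier_mem_wienerMonoid (hA : EntryIntegrable A)
    (hAs : ∀ t ∉ s, A t = 0) : 1 + matrixFourier A ∈ wienerMonoid D s :=
  ⟨A, hA, hAs, rfl⟩

theorem disjoint_wienerMonoid (hss' : volume (s ∩ s' : Set ℝ) = 0) :
    Disjoint (wienerMonoid D s) (wienerMonoid D s') := by
  rw [Submonoid.disjoint_def]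
  rintro _ ⟨A, hA, hAs, rfl⟩ ⟨B, hB, hBs', hAB⟩
  have hAB' : ∀ᵐ u, A u = B u := ae_eq_of_matrixFourier_eq hA hB (add_left_cancel hAB)
  have hA0 : ∀ᵐ u, A u = 0 := by
    filter_upwards [hAB', measure_eq_zero_iff_ae_notMem.1 hss'] with u hu huss'
    by_cases hus : u ∈ s
    · rw [hu, hBs' u fun hus' => huss' ⟨hus, hus'⟩]
    · exact hAs u hus
  rw [matrixFourier_congr_ae hA0]
  ext w i j
  simp [matrixFourier, Real.fourier_eq]

theorem disjoint_wienerMonoid_nonneg_neg :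
    Disjoint (wienerMonoid D (AddSubmonoid.nonneg ℝ))
      (wienerMonoid D (-AddSubmonoid.nonneg ℝ)) := by
  refine disjoint_wienerMonoid (measure_mono_null (t := {0}) ?_ (measure_singleton 0))
  rintro u ⟨hu, hu'⟩
  exact le_antisymm (neg_nonneg.1 hu') hu

/-- The reflection `X ↦ S X(-·)ᵀ S⁻¹` of a symbol, which on the Fourier side is the passage from
a kernel `A(t)` to `S A(-t)ᵀ S⁻¹`. -/
noncomputable def symbolReflection (S : Matrix (Fin D) (Fin D) ℝ)
    (X : ℝ → Matrix (Fin D) (Fin D) ℂ) : ℝ → Matrix (Fin D) (Fin D) ℂ :=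
  fun w => S.map Complex.ofRealHom * (X (-w))ᵀ * S⁻¹.map Complex.ofRealHom

variable {S : Matrix (Fin D) (Fin D) ℝ}

theorem symbolReflection_one (hS : IsUnit S.det) : symbolReflection S 1 = 1 := by
  ext1 w
  simp only [symbolReflection, Pi.one_apply, transpose_one, mul_one]
  rw [← Matrix.map_mul, mul_nonsing_inv S hS, Matrix.map_one _ (map_zero _) (map_one _)]

theorem symbolReflection_mul (hS : IsUnit S.det) (X Y : ℝ → Matrix (Fin D) (Fin D) ℂ) :
    symbolReflection S (X * Y) = symbolReflection S Y * symbolReflection S X := by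
  ext1 w
  have hcancel : S⁻¹.map Complex.ofRealHom * S.map Complex.ofRealHom = 1 := by
    rw [← Matrix.map_mul, nonsing_inv_mul S hS, Matrix.map_one _ (map_zero _) (map_one _)]
  simp only [symbolReflection, Pi.mul_apply, transpose_mul, Matrix.mul_assoc]
  rw [← Matrix.mul_assoc _ (S.map _), hcancel, Matrix.one_mul]

theorem EntryIntegrable.mul_transpose_comp_neg_mul (hA : EntryIntegrable A)
    (S T : Matrix (Fin D) (Fin D) ℝ) : EntryIntegrable fun t => S * (A (-t))ᵀ * T :=
  (hA.transpose_comp_neg.const_mul S).mul_const T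

theorem symbolReflection_one_add_matrixFourier (hS : IsUnit S.det) (hA : EntryIntegrable A) :
    symbolReflection S (1 + matrixFourier A) =
      1 + matrixFourier fun t => S * (A (-t))ᵀ * S⁻¹ := by
  ext1 w
  have hone := congrFun (symbolReflection_one hS) w
  simp only [symbolReflection, Pi.add_apply, transpose_add] at hone ⊢
  rw [mul_add, add_mul, hone, matrixFourier_mul_const _ (hA.transpose_comp_neg.const_mul S),
    matrixFourier_const_mul _ hA.transpose_comp_neg, ← matrixFourier_comp_neg A w,
    ← matrixFourier_transpose]

theorem symbolReflection_mem_wienerMonoid_neg (hS : IsUnit S.det)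
    {X : ℝ → Matrix (Fin D) (Fin D) ℂ} (hX : X ∈ wienerMonoid D s) :
    symbolReflection S X ∈ wienerMonoid D (-s) := by
  obtain ⟨A, hA, hAs, rfl⟩ := hX
  refine ⟨_, hA.mul_transpose_comp_neg_mul S S⁻¹, fun t ht => ?_,
    symbolReflection_one_add_matrixFourier hS hA⟩
  simp [hAs (-t) (mt AddSubmonoid.mem_neg.2 ht)]

end WienerMonoid

section Factorization

variable {M : Type*} [Monoid M] {P N : Submonoid M}

theorem mul_eq_one_of_mul_eq_mul_of_disjoint (hPN : Disjoint P N) {u₁ u₂ g₂ v₁ v₂ w₁ : M}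
    (hu₁ : u₁ ∈ P) (hg₂ : g₂ ∈ P) (hv₂ : v₂ ∈ N) (hw₁ : w₁ ∈ N) (hgu : g₂ * u₂ = 1)
    (hvw : v₁ * w₁ = 1) (h : u₁ * v₁ = u₂ * v₂) : g₂ * u₁ = 1 := by
  have hmid : g₂ * u₁ = v₂ * w₁ :=
    calc g₂ * u₁ = g₂ * (u₁ * v₁) * w₁ := by simp only [mul_assoc, hvw, mul_one]
      _ = v₂ * w₁ := by rw [h, ← mul_assoc, hgu, one_mul]
  exact Submonoid.disjoint_def.1 hPN (mul_mem hg₂ hu₁) (hmid ▸ mul_mem hv₂ hw₁)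

end Factorization

section Hawkes

variable {D : ℕ} {Φ : ℝ → Matrix (Fin D) (Fin D) ℝ}

theorem EntryIntegrable.mconvIter (hΦ : EntryIntegrable Φ) :
    ∀ k, EntryIntegrable (mconvIter D Φ k)
  | 0 => hΦ
  | k + 1 => hΦ.mconv (EntryIntegrable.mconvIter hΦ k)

theorem mconvIter_nonneg (hΦ : ∀ t i j, 0 ≤ Φ t i j) : ∀ k t i j, 0 ≤ mconvIter D Φ k t i j
  | 0 => hΦ
  | k + 1 => mconv_nonneg hΦ (mconvIter_nonneg hΦ k)

theorem mconvIter_eq_zero_of_notMem {s : AddSubmonoid ℝ} (hΦ : ∀ t ∉ s, Φ t = 0) :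
    ∀ k, ∀ t ∉ s, mconvIter D Φ k t = 0
  | 0 => hΦ
  | k + 1 => mconv_eq_zero_of_notMem hΦ (mconvIter_eq_zero_of_notMem hΦ k)

theorem matrixFourier_mconvIter (hΦ : EntryIntegrable Φ) (k : ℕ) (w : ℝ) :
    matrixFourier (mconvIter D Φ k) w = matrixFourier Φ w ^ (k + 1) := by
  induction k with
  | zero => rw [mconvIter, zero_add, pow_one]
  | succ k ih => rw [mconvIter, matrixFourier_mconv hΦ (hΦ.mconvIter k), Pi.mul_apply, ih,
      pow_succ' _ (k + 1)]

theorem hawkesPsi_eq_zero_of_notMem {s : AddSubmonoid ℝ} (hΦ : ∀ t ∉ s, Φ t = 0) :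
    ∀ t ∉ s, hawkesPsi D Φ t = 0 := by
  intro t ht
  ext i j
  simp [hawkesPsi, mconvIter_eq_zero_of_notMem hΦ _ t ht]

theorem IsHawkesKernel.entryIntegrable (hΦ : IsHawkesKernel D Φ) : EntryIntegrable Φ :=
  hΦ.2.2.1

theorem IsHawkesKernel.eq_zero_of_notMem_nonneg (hΦ : IsHawkesKernel D Φ) :
    ∀ t ∉ AddSubmonoid.nonneg ℝ, Φ t = 0 :=
  fun t ht => hΦ.2.2.2 t (not_le.1 ht)

theorem HypothesisH.summable_integral_norm_mconvIter (hH : HypothesisH D Φ)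
    (hΦ : IsHawkesKernel D Φ) (i j : Fin D) :
    Summable fun k => ∫ t, ‖mconvIter D Φ k t i j‖ := by
  rw [HypothesisH, ← matrixFourier_zero_eq_map_kernelNorm] at hH
  have hpow := (summable_nat_add_iff 1).2 (summable_matrix_pow_of_spectralRadius_lt_one hH)
  have hentry : Summable fun k => (matrixFourier Φ 0 ^ (k + 1)) i j :=
    Pi.summable.1 (Pi.summable.1 hpow i) j
  rw [← Complex.summable_ofReal]
  refine hentry.congr fun k => ?_
  simp only [Real.norm_of_nonneg (mconvIter_nonneg hΦ.2.1 k _ i j)]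
  rw [← matrixFourier_mconvIter hΦ.entryIntegrable, matrixFourier_zero_eq_map_kernelNorm]
  rfl

theorem HypothesisH.entryIntegrable_hawkesPsi (hH : HypothesisH D Φ) (hΦ : IsHawkesKernel D Φ) :
    EntryIntegrable (hawkesPsi D Φ) := fun i j =>
  integrable_tsum_of_summable_integral_norm (fun k => hΦ.entryIntegrable.mconvIter k i j)
    (hH.summable_integral_norm_mconvIter hΦ i j)

theorem HypothesisH.hasSum_matrixFourier_pow (hH : HypothesisH D Φ) (hΦ : IsHawkesKernel D Φ)
    (w : ℝ) :
    HasSum (fun k => matrixFourier Φ w ^ k) (1 + matrixFourier (hawkesPsi D Φ) w) := by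
  suffices h : HasSum (fun k => matrixFourier Φ w ^ (k + 1)) (matrixFourier (hawkesPsi D Φ) w) by
    simpa only [pow_zero] using h.zero_add
  simp_rw [← matrixFourier_mconvIter hΦ.entryIntegrable]
  refine Pi.hasSum.2 fun i => Pi.hasSum.2 fun j => ?_
  have hsum : Summable fun k => ∫ t, ‖(mconvIter D Φ k t i j : ℂ)‖ := by
    simpa only [Complex.norm_real] using hH.summable_integral_norm_mconvIter hΦ i j
  simpa only [matrixFourier, hawkesPsi, Matrix.of_apply, Complex.ofReal_tsum] using
    hasSum_fourier_of_summable_integral_norm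
      (fun k => (hΦ.entryIntegrable.mconvIter k i j).ofReal) hsum w

theorem HypothesisH.one_sub_mul_one_add_hawkesPsi (hH : HypothesisH D Φ) (hΦ : IsHawkesKernel D Φ) :
    (1 - matrixFourier Φ) * (1 + matrixFourier (hawkesPsi D Φ)) = 1 := by
  ext1 w
  have h := hH.hasSum_matrixFourier_pow hΦ w
  simpa only [h.tsum_eq, Pi.mul_apply, Pi.sub_apply, Pi.add_apply, Pi.one_apply]
    using h.summable.one_sub_mul_tsum_pow

theorem HypothesisH.one_add_hawkesPsi_mul_one_sub (hH : HypothesisH D Φ) (hΦ : IsHawkesKernel D Φ) :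
    (1 + matrixFourier (hawkesPsi D Φ)) * (1 - matrixFourier Φ) = 1 := by
  ext1 w
  have h := hH.hasSum_matrixFourier_pow hΦ w
  simpa only [h.tsum_eq, Pi.mul_apply, Pi.sub_apply, Pi.add_apply, Pi.one_apply]
    using h.summable.tsum_pow_mul_one_sub

theorem IsHawkesKernel.one_sub_matrixFourier_mem_wienerMonoid (hΦ : IsHawkesKernel D Φ) :
    1 - matrixFourier Φ ∈ wienerMonoid D (AddSubmonoid.nonneg ℝ) := by
  rw [sub_eq_add_neg, ← matrixFourier_neg]
  exact one_add_matrixFourier_mem_wienerMonoid hΦ.entryIntegrable.neg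
    fun t ht => by rw [hΦ.eq_zero_of_notMem_nonneg t ht, neg_zero]

theorem HypothesisH.one_add_matrixFourier_hawkesPsi_mem_wienerMonoid (hH : HypothesisH D Φ)
    (hΦ : IsHawkesKernel D Φ) :
    1 + matrixFourier (hawkesPsi D Φ) ∈ wienerMonoid D (AddSubmonoid.nonneg ℝ) :=
  one_add_matrixFourier_mem_wienerMonoid (hH.entryIntegrable_hawkesPsi hΦ)
    (hawkesPsi_eq_zero_of_notMem hΦ.eq_zero_of_notMem_nonneg)

theorem HypothesisH.one_add_matrixFourier_hawkesG (hH : HypothesisH D Φ)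
    (hΦ : IsHawkesKernel D Φ) {S : Matrix (Fin D) (Fin D) ℝ} (hS : IsUnit S.det) :
    1 + matrixFourier (hawkesG D Φ S) =
      (1 + matrixFourier (hawkesPsi D Φ)) *
        symbolReflection S (1 + matrixFourier (hawkesPsi D Φ)) := by
  have hΨ := hH.entryIntegrable_hawkesPsi hΦ
  rw [symbolReflection_one_add_matrixFourier hS hΨ,
    one_add_matrixFourier_mul_one_add_matrixFourier hΨ (hΨ.mul_transpose_comp_neg_mul S S⁻¹)]
  rfl

end Hawkes

theorem hawkes_kernel_unique_from_secondOrder_general {D : ℕ}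
    {Φ₁ Φ₂ : ℝ → Matrix (Fin D) (Fin D) ℝ}
    (hΦ₁ : IsHawkesKernel D Φ₁) (hH₁ : HypothesisH D Φ₁)
    (hΦ₂ : IsHawkesKernel D Φ₂) (hH₂ : HypothesisH D Φ₂)
    {S₁ S₂ : Matrix (Fin D) (Fin D) ℝ} (hS₁ : IsUnit S₁.det) (hS₂ : IsUnit S₂.det)
    (hg : ∀ᵐ t : ℝ, hawkesG D Φ₁ S₁ t = hawkesG D Φ₂ S₂ t) :
    ∀ᵐ t : ℝ, Φ₁ t = Φ₂ t := by
  have hfactor := congrArg (1 + ·) (matrixFourier_congr_ae hg)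
  simp only [hH₁.one_add_matrixFourier_hawkesG hΦ₁ hS₁,
    hH₂.one_add_matrixFourier_hawkesG hΦ₂ hS₂] at hfactor
  have hanti₁ : symbolReflection S₁ (1 + matrixFourier (hawkesPsi D Φ₁)) *
      symbolReflection S₁ (1 - matrixFourier Φ₁) = 1 := by
    rw [← symbolReflection_mul hS₁, hH₁.one_sub_mul_one_add_hawkesPsi hΦ₁,
      symbolReflection_one hS₁]
  have hinv : (1 - matrixFourier Φ₂) * (1 + matrixFourier (hawkesPsi D Φ₁)) = 1 :=
    mul_eq_one_of_mul_eq_mul_of_disjoint disjoint_wienerMonoid_nonneg_neg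
      (hH₁.one_add_matrixFourier_hawkesPsi_mem_wienerMonoid hΦ₁)
      hΦ₂.one_sub_matrixFourier_mem_wienerMonoid
      (symbolReflection_mem_wienerMonoid_neg hS₂
        (hH₂.one_add_matrixFourier_hawkesPsi_mem_wienerMonoid hΦ₂))
      (symbolReflection_mem_wienerMonoid_neg hS₁ hΦ₁.one_sub_matrixFourier_mem_wienerMonoid)
      (hH₂.one_sub_mul_one_add_hawkesPsi hΦ₂) hanti₁ hfactor
  have hsymbol : 1 - matrixFourier Φ₂ = 1 - matrixFourier Φ₁ :=
    left_inv_eq_right_inv hinv (hH₁.one_add_hawkesPsi_mul_one_sub hΦ₁)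
  exact ae_eq_of_matrixFourier_eq hΦ₁.entryIntegrable hΦ₂.entryIntegrable
    (sub_right_injective hsymbol).symm

/-- A stationary Hawkes process is uniquely determined by its mean intensity
matrix `Σ` and its conditional-expectation matrix `g`: if two Hawkes kernel matrices satisfying
(H) give rise to the same `g`, they coincide almost everywhere. -/
theorem hawkes_kernel_unique_from_secondOrder (D : ℕ) (hD : 0 < D)
    (Φ₁ Φ₂ : ℝ → Matrix (Fin D) (Fin D) ℝ)
    (hΦ₁ : IsHawkesKernel D Φ₁) (hH₁ : HypothesisH D Φ₁)
    (hΦ₂ : IsHawkesKernel D Φ₂) (hH₂ : HypothesisH D Φ₂)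
    (S : Matrix (Fin D) (Fin D) ℝ) (hSdiag : S.IsDiag) (hSpos : ∀ i, 0 < S i i)
    (hg : ∀ᵐ t : ℝ, hawkesG D Φ₁ S t = hawkesG D Φ₂ S t) :
    ∀ᵐ t : ℝ, Φ₁ t = Φ₂ t := by
  have hS : IsUnit S.det := by
    rw [← hSdiag.diagonal_diag, det_diagonal]
    exact (Finset.prod_pos fun i _ => hSpos i).ne'.isUnit
  exact hawkes_kernel_unique_from_secondOrder_general hΦ₁ hH₁ hΦ₂ hH₂ hS hS hg
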